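/- arXiv:1709.04379 — 2 statements merged into one kernel-verified Lean document; each statement's English description precedes it below -/
import Mathlib

section
/- The ring of integers O_L = ℤ[ω][θ] of the number field L = ℚ(ω, θ), where ω = e^{2πi/3} and θ = ζ₇ + ζ₇⁻¹ = 2cos(2π/7), is a principal ideal domain. -/
noncomputable section

open Complex

/-- `ω = e^{2πi/3}`, the primitive cube root of unity. -/
def om : ℂ := Complex.exp (2 * Real.pi * Complex.I / 3)

/-- `θ = ζ₇ + ζ₇⁻¹ = 2cos(2π/7)`. -/
def t7 : ℂ := 2 * Real.cos (2 * Real.pi / 7)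

/-- The ring of integers `O_L = ℤ[ω][θ]` of `L = ℚ(ω,θ)`, realized as the subring of
`ℂ` generated by `ω` and `θ`. -/
def OL7 : Subring ℂ := Subring.closure {om, t7}

/-!
The element `θ - 2` is a root of `X³ + 7X² + 14X + 7`, which is Eisenstein at `7` and has
discriminant `7²`; hence `ℤ[θ]` is the ring of integers of `ℚ(θ)`. Since the discriminants `-3` of
`ℚ(ω)` and `49` of `ℚ(θ)` are coprime, `ℤ[ω, θ]` is the ring of integers of the compositum `L`,
which has degree `6` and `|d_L| = 3³ · 49²`. The Minkowski bound of `L` is less than `9`. A residue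
field of `O_L` contains roots of `X² + X + 1` and of the cubic above, which for a field with at most
`8` elements is possible only in characteristic `7`. Finally, a prime over `7` is generated by
`θ - ω` or `θ - ω̄`, because `(θ - ω)(θ - ω̄) = -(θ - 2)(θ + 1)²` and `θ + 1` is a unit.
-/

open Polynomial NumberField IntermediateField

section ResultantNorm

variable {k L : Type*} [Field k] [Field L] [Algebra k L]

theorem resultant_eq_prod_map_eval_roots {f g : k[X]} (hf : f.Monic) (hsplit : f.Splits) {n : ℕ}
    (hn : g.natDegree ≤ n) :
    f.resultant g f.natDegree n = (f.roots.map (eval · g)).prod := by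
  have resultant_prod_X_sub_C (s : Multiset k) :
      ((s.map (X - C ·)).prod).resultant g (Multiset.card s) n = (s.map (eval · g)).prod := by
    induction s using Multiset.induction with
    | empty => simp
    | cons a s ih =>
      have hmul := resultant_mul_left (X - C a) (s.map (X - C ·)).prod g n hn
      rw [natDegree_X_sub_C, natDegree_multiset_prod_X_sub_C_eq_card,
        resultant_X_sub_C_left g n a hn, ih] at hmul
      rwa [Multiset.map_cons, Multiset.prod_cons, Multiset.card_cons, Multiset.map_cons,
        Multiset.prod_cons, add_comm]
  have hprod := resultant_prod_X_sub_C f.roots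
  rwa [← hsplit.natDegree_eq_card_roots, ← hsplit.eq_prod_roots_of_monic hf] at hprod

variable [Algebra.IsSeparable k L] (B : PowerBasis k L)

theorem norm_aeval_gen_eq_resultant {g : k[X]} {n : ℕ} (hn : g.natDegree ≤ n) :
    Algebra.norm k (aeval B.gen g) =
      (minpoly k B.gen).resultant g (minpoly k B.gen).natDegree n := by
  classical
  have := B.finite
  let E := AlgebraicClosure L
  set f := minpoly k B.gen
  have hmonic : f.Monic := minpoly.monic B.isIntegral_gen
  have hnodup : (f.aroots E).Nodup :=
    nodup_roots (Separable.map (Algebra.IsSeparable.isSeparable k B.gen))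
  apply (algebraMap k E).injective
  calc algebraMap k E (Algebra.norm k (aeval B.gen g))
      = ∏ σ : L →ₐ[k] E, aeval (σ B.gen) g := by
        simp only [Algebra.norm_eq_prod_embeddings k E, aeval_algHom_apply]
    _ = ∏ y : {y // y ∈ f.aroots E}, aeval (y : E) g :=
        Fintype.prod_equiv B.liftEquiv' _ _ fun σ ↦ by rw [B.liftEquiv'_apply_coe]
    _ = ((f.aroots E).map (aeval · g)).prod := by
        rw [Finset.prod_mem_multiset _ _ (aeval · g) fun _ ↦ rfl, Finset.prod_eq_multiset_prod,
          Multiset.toFinset_val, hnodup.dedup]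
    _ = ((f.map (algebraMap k E)).roots.map (eval · (g.map (algebraMap k E)))).prod := by
        simp only [eval_map_algebraMap]
    _ = algebraMap k E (f.resultant g f.natDegree n) := by
        rw [← resultant_eq_prod_map_eval_roots (hmonic.map _) (IsAlgClosed.splits _)
          (natDegree_map_le.trans hn), natDegree_map, resultant_map_map]

theorem discr_powerBasis_eq_discr_minpoly :
    Algebra.discr k B.basis = (minpoly k B.gen).discr := by
  have := B.finite
  have hmonic : (minpoly k B.gen).Monic := minpoly.monic B.isIntegral_gen
  rw [Algebra.discr_powerBasis_eq_norm, norm_aeval_gen_eq_resultant B (natDegree_derivative_le _),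
    resultant_deriv (minpoly.degree_pos B.isIntegral_gen), hmonic.leadingCoeff, B.finrank,
    B.natDegree_minpoly, mul_one, ← mul_assoc, ← mul_pow, neg_one_mul, neg_neg, one_pow, one_mul]

end ResultantNorm

theorem minpoly_eq_of_irreducible_of_monic {R S : Type*} [CommRing R] [IsDomain R]
    [IsIntegrallyClosed R] [CommRing S] [IsDomain S] [Algebra R S] [Module.IsTorsionFree R S]
    {f : R[X]} (hirr : Irreducible f) (hmonic : f.Monic) {x : S} (hx : aeval x f = 0) :
    minpoly R x = f := by
  have hint : IsIntegral R x := ⟨f, hmonic, hx⟩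
  have hassoc : Associated (minpoly R x) f :=
    (minpoly.prime_of_isIntegrallyClosed hint).irreducible.associated_of_dvd hirr
      (minpoly.isIntegrallyClosed_dvd hint hx)
  exact eq_of_monic_of_associated (minpoly.monic hint) hmonic hassoc

section PowerIntegralBasis

variable {R k L : Type*} [CommRing R] [IsDomain R] [IsIntegrallyClosed R] [Field k] [Field L]
  [Algebra R k] [IsFractionRing R k] [Algebra k L] [Algebra R L] [IsScalarTower R k L]

theorem mem_adjoin_gen_of_minpoly_isEisensteinAt [Algebra.IsSeparable k L] {B : PowerBasis k L}
    (hgen : IsIntegral R B.gen) {p d : R} (hp : Prime p)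
    (heis : (minpoly R B.gen).IsEisensteinAt (Ideal.span {p}))
    (hdiscr : Algebra.discr k B.basis = algebraMap R k d) {n : ℕ} (hd : d ∣ p ^ n)
    {z : L} (hz : IsIntegral R z) : z ∈ Algebra.adjoin R {B.gen} := by
  refine mem_adjoin_of_smul_prime_pow_smul_of_minpoly_isEisensteinAt hp hgen hz (n := n) ?_ heis
  have := B.finite
  obtain ⟨c, hc⟩ := hd
  have hdz := Algebra.discr_mul_isIntegral_mem_adjoin k hgen hz
  rw [hdiscr, algebraMap_smul] at hdz
  rw [hc, mul_comm, mul_smul]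
  exact Subalgebra.smul_mem _ hdz c

end PowerIntegralBasis

section RingOfIntegers

variable {F : Type*} [Field F] [NumberField F] {y : 𝓞 F} {B : PowerBasis ℚ F}

theorem adjoin_eq_top_of_minpoly_isEisensteinAt (hB : B.gen = y) {p d : ℤ} (hp : Prime p)
    (heis : (minpoly ℤ y).IsEisensteinAt (Ideal.span {p}))
    (hdiscr : Algebra.discr ℚ B.basis = d) {n : ℕ} (hd : d ∣ p ^ n) :
    Algebra.adjoin ℤ {y} = ⊤ := by
  have hmap : (Algebra.adjoin ℤ {y}).map (IsScalarTower.toAlgHom ℤ (𝓞 F) F) =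
      Algebra.adjoin ℤ {B.gen} := by
    rw [AlgHom.map_adjoin, Set.image_singleton, IsScalarTower.coe_toAlgHom', hB]
  rw [Algebra.eq_top_iff]
  intro z
  have heis' : (minpoly ℤ B.gen).IsEisensteinAt (Ideal.span {p}) := by
    rwa [hB, RingOfIntegers.minpoly_coe]
  have hz := mem_adjoin_gen_of_minpoly_isEisensteinAt (hB ▸ y.isIntegral_coe) hp heis' hdiscr hd
    z.isIntegral_coe
  rw [← hmap] at hz
  obtain ⟨w, hw, hwz⟩ := hz
  rwa [← RingOfIntegers.coe_injective hwz]

theorem discr_eq_discr_powerBasis (hB : B.gen = y) (hy : Algebra.adjoin ℤ {y} = ⊤) :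
    (NumberField.discr F : ℚ) = Algebra.discr ℚ B.basis := by
  let B' : PowerBasis ℤ (𝓞 F) :=
    PowerBasis.ofAdjoinEqTop' (RingOfIntegers.isIntegral y) hy
  have hgen : B'.gen = y := PowerBasis.ofAdjoinEqTop'_gen _ _
  have hdim : B'.dim = B.dim := by
    rw [← PowerBasis.finrank, ← PowerBasis.finrank, RingOfIntegers.rank F]
  rw [← NumberField.discr_eq_discr _ B'.basis, ← eq_intCast (algebraMap ℤ ℚ),
    ← Algebra.discr_localizationLocalization ℤ (nonZeroDivisors ℤ) F,
    ← Algebra.discr_reindex _ _ (finCongr hdim)]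
  congr 1
  ext i
  simp [Module.Basis.localizationLocalization_apply, hgen, hB]

end RingOfIntegers

/-- The minimal polynomial of `θ - 2`, obtained from `X³ + X² - 2X - 1` (the minimal polynomial of
`θ`) by the shift that makes it Eisenstein at `7`. -/
def shiftedCubic : ℤ[X] := X ^ 3 + C 7 * X ^ 2 + C 14 * X + C 7

section ShiftedCubic

theorem aeval_shiftedCubic {R : Type*} [CommRing R] (x : R) :
    aeval x shiftedCubic = x ^ 3 + 7 * x ^ 2 + 14 * x + 7 := by
  simp only [shiftedCubic, map_add, map_mul, map_pow, aeval_X, map_ofNat]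

theorem shiftedCubic_natDegree : shiftedCubic.natDegree = 3 := by
  unfold shiftedCubic; compute_degree!

theorem shiftedCubic_monic : shiftedCubic.Monic := by
  unfold shiftedCubic; monicity!

theorem shiftedCubic_isEisensteinAt : shiftedCubic.IsEisensteinAt (Ideal.span {(7 : ℤ)}) := by
  refine shiftedCubic_monic.isEisensteinAt_of_mem_of_notMem ?_ ?_ ?_
  · exact ((Ideal.span_singleton_prime (by norm_num)).2 (by norm_num)).ne_top
  · intro n hn
    rw [shiftedCubic_natDegree] at hn
    rw [Ideal.mem_span_singleton]
    interval_cases n <;> simp [shiftedCubic, coeff_X, coeff_X_pow]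
  · rw [Ideal.span_singleton_pow, Ideal.mem_span_singleton]
    simp [shiftedCubic, coeff_X, coeff_X_pow]

theorem shiftedCubic_irreducible : Irreducible shiftedCubic :=
  shiftedCubic_isEisensteinAt.irreducible
    ((Ideal.span_singleton_prime (by norm_num)).2 (by norm_num))
    shiftedCubic_monic.isPrimitive (by rw [shiftedCubic_natDegree]; norm_num)

theorem discr_map_shiftedCubic {R : Type*} [CommRing R] [Nontrivial R] :
    (shiftedCubic.map (algebraMap ℤ R)).discr = 49 := by
  have hdegree : (shiftedCubic.map (algebraMap ℤ R)).degree = 3 := by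
    rw [shiftedCubic_monic.degree_map, degree_eq_natDegree shiftedCubic_monic.ne_zero,
      shiftedCubic_natDegree, Nat.cast_ofNat]
  rw [discr_of_degree_eq_three hdegree]
  simp only [shiftedCubic, coeff_map, coeff_add, coeff_C_mul, coeff_X_pow, coeff_X, coeff_C]
  norm_num

theorem minpoly_int_eq_shiftedCubic {S : Type*} [CommRing S] [IsDomain S] [CharZero S] {x : S}
    (hx : aeval x shiftedCubic = 0) : minpoly ℤ x = shiftedCubic :=
  minpoly_eq_of_irreducible_of_monic shiftedCubic_irreducible shiftedCubic_monic hx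

theorem minpoly_rat_eq_map_shiftedCubic {F : Type*} [Field F] [Algebra ℚ F] {x : F}
    (hx : aeval x shiftedCubic = 0) : minpoly ℚ x = shiftedCubic.map (algebraMap ℤ ℚ) := by
  have : CharZero F := algebraRat.charZero F
  rw [minpoly.isIntegrallyClosed_eq_field_fractions' ℚ ⟨shiftedCubic, shiftedCubic_monic, hx⟩,
    minpoly_int_eq_shiftedCubic hx]

variable {F : Type*} [Field F] [NumberField F] {y : 𝓞 F} {B : PowerBasis ℚ F}

theorem discr_powerBasis_of_aeval_shiftedCubic (hB : B.gen = y)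
    (hy : aeval y shiftedCubic = 0) : Algebra.discr ℚ B.basis = 49 := by
  have hy' : aeval (y : F) shiftedCubic = 0 := by rw [aeval_algebraMap_apply, hy, map_zero]
  rw [discr_powerBasis_eq_discr_minpoly, hB, minpoly_rat_eq_map_shiftedCubic hy',
    discr_map_shiftedCubic]

theorem adjoin_eq_top_of_aeval_shiftedCubic (hB : B.gen = y)
    (hy : aeval y shiftedCubic = 0) : Algebra.adjoin ℤ {y} = ⊤ := by
  refine adjoin_eq_top_of_minpoly_isEisensteinAt hB (p := 7) (d := 49) (n := 2) (by norm_num) ?_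
    ?_ (by norm_num)
  · rw [minpoly_int_eq_shiftedCubic hy]
    exact shiftedCubic_isEisensteinAt
  · rw [discr_powerBasis_of_aeval_shiftedCubic hB hy, Int.cast_ofNat]

theorem discr_eq_of_aeval_shiftedCubic (hB : B.gen = y) (hy : aeval y shiftedCubic = 0) :
    NumberField.discr F = 49 := by
  have h := discr_eq_discr_powerBasis hB (adjoin_eq_top_of_aeval_shiftedCubic hB hy)
  rw [discr_powerBasis_of_aeval_shiftedCubic hB hy] at h
  exact_mod_cast h

end ShiftedCubic

section ResidueFields

variable {k : Type*} [Field k] [Finite k]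

theorem prime_dvd_card_sub_one_of_pow_eq_one {p : ℕ} (hp : p.Prime) {a : k} (hpow : a ^ p = 1)
    (hne : a ≠ 1) : p ∣ Nat.card k - 1 := by
  have := Fintype.ofFinite k
  have : Fact p.Prime := ⟨hp⟩
  have ha : a ≠ 0 := by
    rintro rfl
    simp [hp.ne_zero] at hpow
  rw [← orderOf_eq_prime hpow hne, Nat.card_eq_fintype_card]
  exact orderOf_dvd_of_pow_eq_one (FiniteField.pow_card_sub_one_eq_one a ha)

theorem three_dvd_card_sub_one {a : k} (ha : a ^ 2 + a + 1 = 0) (h3 : (3 : k) ≠ 0) :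
    3 ∣ Nat.card k - 1 := by
  refine prime_dvd_card_sub_one_of_pow_eq_one Nat.prime_three (a := a)
    (by linear_combination (a - 1) * ha) ?_
  rintro rfl
  exact h3 (by linear_combination ha)

theorem seven_dvd_card_sub_one {b : k} (hb : aeval b shiftedCubic = 0) (h2 : (2 : k) = 0) :
    7 ∣ Nat.card k - 1 := by
  rw [aeval_shiftedCubic] at hb
  refine prime_dvd_card_sub_one_of_pow_eq_one (by norm_num) (a := b) (by grind) ?_
  rintro rfl
  exact one_ne_zero (α := k) (by linear_combination hb - 14 * h2)

theorem thirteen_dvd_card_sub_one {b : k} (hb : aeval b shiftedCubic = 0) (h3 : (3 : k) = 0) :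
    13 ∣ Nat.card k - 1 := by
  rw [aeval_shiftedCubic] at hb
  refine prime_dvd_card_sub_one_of_pow_eq_one (by norm_num) (a := b ^ 2) (by grind) ?_
  intro h
  exact one_ne_zero (α := k) (by grind)

theorem seven_eq_zero_of_card_le_eight (hcard : Nat.card k ≤ 8) {a b : k}
    (ha : a ^ 2 + a + 1 = 0) (hb : aeval b shiftedCubic = 0) : (7 : k) = 0 := by
  have := Fintype.ofFinite k
  have hzero : (Nat.card k : k) = 0 := by
    rw [Nat.card_eq_fintype_card]; exact Nat.cast_card_eq_zero k
  have hone_lt : 1 < Nat.card k := Finite.one_lt_card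
  suffices Nat.card k = 7 by rwa [this] at hzero
  by_cases h3 : (3 : k) = 0
  · have := Nat.le_of_dvd (by omega) (thirteen_dvd_card_sub_one hb h3)
    omega
  · have hdvd3 := three_dvd_card_sub_one ha h3
    by_cases h2 : (2 : k) = 0
    · have hdvd7 := seven_dvd_card_sub_one hb h2
      omega
    · have hne4 : Nat.card k ≠ 4 := fun h4 ↦ by
        rw [h4] at hzero
        exact h2 (by simpa using (show (2 : k) * 2 = 0 by linear_combination hzero))
      omega

end ResidueFields

section PrimeIdeals

variable {R : Type*} [CommRing R]

theorem exists_sub_intCast_mem_of_adjoin_eq_top {s : Set R} (hs : Algebra.adjoin ℤ s = ⊤)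
    {I : Ideal R} (hI : ∀ y ∈ s, ∃ n : ℤ, y - n ∈ I) (z : R) : ∃ n : ℤ, z - n ∈ I := by
  have mem_comap_bot_iff (y : R) :
      y ∈ (⊥ : Subalgebra ℤ (R ⧸ I)).comap (Ideal.Quotient.mkₐ ℤ I) ↔ ∃ n : ℤ, y - n ∈ I := by
    simp [Subalgebra.mem_comap, Algebra.mem_bot, ← Ideal.Quotient.mk_eq_mk_iff_sub_mem, eq_comm]
  rw [← mem_comap_bot_iff]
  have hle : Algebra.adjoin ℤ s ≤ (⊥ : Subalgebra ℤ (R ⧸ I)).comap (Ideal.Quotient.mkₐ ℤ I) :=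
    Algebra.adjoin_le fun y hy ↦ (mem_comap_bot_iff y).2 (hI y hy)
  exact hle (hs ▸ Algebra.mem_top)

theorem eq_of_le_of_forall_exists_sub_intCast_mem {I P : Ideal R} (hIP : I ≤ P) (hP : P ≠ ⊤)
    {p : ℕ} (hp : p.Prime) (hpI : (p : R) ∈ I) (hI : ∀ z : R, ∃ n : ℤ, z - n ∈ I) : P = I := by
  have hcomap : Ideal.span {(p : ℤ)} = P.comap (Int.castRingHom R) := by
    refine (PrincipalIdealRing.isMaximal_of_irreducible
      (Nat.prime_iff_prime_int.1 hp).irreducible).eq_of_le (Ideal.comap_ne_top _ hP) ?_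
    rw [Ideal.span_singleton_le_iff_mem, Ideal.mem_comap, map_natCast]
    exact hIP hpI
  refine le_antisymm (fun z hz ↦ ?_) hIP
  obtain ⟨n, hn⟩ := hI z
  have hnP : n ∈ P.comap (Int.castRingHom R) := by
    simpa using P.sub_mem hz (hIP hn)
  rw [← hcomap, Ideal.mem_span_singleton] at hnP
  obtain ⟨c, rfl⟩ := hnP
  have hpc : ((p * c : ℤ) : R) ∈ I := by
    push_cast
    exact I.mul_mem_right _ hpI
  simpa using I.add_mem hn hpc

variable {w x : R}

theorem eq_span_of_sub_two_mem (hw : w ^ 2 + w + 1 = 0) (hx : aeval x shiftedCubic = 0)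
    (hgen : Algebra.adjoin ℤ {w, x} = ⊤) {P : Ideal R} (hP : P ≠ ⊤) (hwP : w - 2 ∈ P)
    (hxP : x ∈ P) : P = Ideal.span {x + 2 - w} := by
  rw [aeval_shiftedCubic] at hx
  set I := Ideal.span {x + 2 - w} with hI
  have hxI : x ∈ I := by
    -- `(θ - ω)(θ - ω̄) = θ² + θ + 1 = -(θ - 2)(θ + 1)²`, and `θ + 1` is a unit.
    have hconj : (x + 2 - w) * (x + 3 + w) = -x * (x + 3) ^ 2 := by
      linear_combination hx - hw
    have hunit : (x + 3) * (x ^ 2 + 4 * x + 2) = -1 := by linear_combination hx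
    have hfactor : x = (x + 2 - w) * (-(x + 3 + w) * (x ^ 2 + 4 * x + 2) ^ 2) := by
      linear_combination (x ^ 2 + 4 * x + 2) ^ 2 * hconj +
        x * (1 - (x + 3) * (x ^ 2 + 4 * x + 2)) * hunit
    exact Ideal.mem_span_singleton.2 ⟨_, hfactor⟩
  have hwI : w - 2 ∈ I := by
    have h := I.sub_mem hxI (Ideal.mem_span_singleton_self (x + 2 - w))
    rwa [show x - (x + 2 - w) = w - 2 by ring] at h
  have h7I : ((7 : ℕ) : R) ∈ I := by
    have h := I.mul_mem_left (-(x ^ 2 + 7 * x + 14)) hxI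
    rwa [show -(x ^ 2 + 7 * x + 14) * x = (7 : ℕ) by push_cast; linear_combination -hx] at h
  have hIP : I ≤ P := by
    rw [hI, Ideal.span_singleton_le_iff_mem, show x + 2 - w = x - (w - 2) by ring]
    exact P.sub_mem hxP hwP
  refine eq_of_le_of_forall_exists_sub_intCast_mem hIP hP (by norm_num) h7I
    (exists_sub_intCast_mem_of_adjoin_eq_top hgen ?_)
  rintro y (rfl | rfl)
  · exact ⟨2, by simpa using hwI⟩
  · exact ⟨0, by simpa using hxI⟩

theorem adjoin_neg_one_sub_eq_top (hgen : Algebra.adjoin ℤ {w, x} = ⊤) :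
    Algebra.adjoin ℤ {-1 - w, x} = ⊤ := by
  rw [← top_le_iff, ← hgen]
  refine Algebra.adjoin_le ?_
  rintro y (rfl | rfl)
  · have hmem : -1 - y ∈ Algebra.adjoin ℤ {-1 - y, x} := Algebra.subset_adjoin (by simp)
    simpa using sub_mem (neg_mem (one_mem _)) hmem
  · exact Algebra.subset_adjoin (by simp)

theorem isPrincipal_of_seven_mem (hw : w ^ 2 + w + 1 = 0) (hx : aeval x shiftedCubic = 0)
    (hgen : Algebra.adjoin ℤ {w, x} = ⊤) {P : Ideal R} [hP : P.IsPrime] (h7 : (7 : R) ∈ P) :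
    Submodule.IsPrincipal P := by
  have hxP : x ∈ P := by
    refine hP.mem_of_pow_mem 3 ?_
    rw [aeval_shiftedCubic] at hx
    rw [show x ^ 3 = -(x ^ 2 + 2 * x + 1) * 7 by linear_combination hx]
    exact P.mul_mem_left _ h7
  have hmul : (w - 2) * (w - 4) ∈ P := by
    rw [show (w - 2) * (w - 4) = (-w + 1) * 7 by linear_combination hw]
    exact P.mul_mem_left _ h7
  rcases hP.mem_or_mem hmul with hw2 | hw4
  · exact ⟨_, eq_span_of_sub_two_mem hw hx hgen hP.ne_top hw2 hxP⟩
  · have hconj : -1 - w - 2 ∈ P := by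
      rw [show -1 - w - 2 = -(w - 4) - 7 by ring]
      exact P.sub_mem (P.neg_mem hw4) h7
    exact ⟨_, eq_span_of_sub_two_mem (by linear_combination hw) hx (adjoin_neg_one_sub_eq_top hgen)
      hP.ne_top hconj hxP⟩

end PrimeIdeals

theorem exists_ringOfIntegers_coe_eq {k E : Type*} [Field k] [Field E] [Algebra k E]
    {F : IntermediateField k E} {z : E} (hz : z ∈ F) (hint : IsIntegral ℤ z) :
    ∃ y : 𝓞 F, ((y : F) : E) = z :=
  ⟨⟨⟨z, hz⟩, (isIntegral_algebraMap_iff (algebraMap F E).injective).1 hint⟩, rfl⟩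

section Compositum

variable {K : Type*} [Field K] [NumberField K]

section CoprimeDiscriminants

variable {F₁ F₂ : IntermediateField ℚ K} [IsGalois ℚ F₁]

theorem adjoin_pair_eq_top_of_isCoprime_discr (htop : F₁ ⊔ F₂ = ⊤)
    (hcop : IsCoprime (discr F₁) (discr F₂)) {y₁ : 𝓞 F₁} {y₂ : 𝓞 F₂}
    (h₁ : Algebra.adjoin ℤ {y₁} = ⊤) (h₂ : Algebra.adjoin ℤ {y₂} = ⊤) :
    Algebra.adjoin ℤ {algebraMap (𝓞 F₁) (𝓞 K) y₁, algebraMap (𝓞 F₂) (𝓞 K) y₂} = ⊤ := by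
  have hsup : F₁.toSubalgebra ⊔ F₂.toSubalgebra = ⊤ := by
    rw [← sup_toSubalgebra_of_left, htop, top_toSubalgebra]
  rw [← IsDedekindDomain.adjoin_union_eq_top_of_isCoprime_differentialIdeal ℤ (𝓞 K) (𝓞 F₁) (𝓞 F₂)
    (linearDisjoint_of_isGalois_isCoprime_discr _ _ _ hcop) hsup
    (isCoprime_differentIdeal_of_isCoprime_discr K hcop) h₁ h₂,
    Set.image_singleton, Set.image_singleton, Set.singleton_union]

theorem natAbs_discr_eq_of_isCoprime_discr (htop : F₁ ⊔ F₂ = ⊤)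
    (hcop : IsCoprime (discr F₁) (discr F₂)) :
    (discr K).natAbs = (discr F₁).natAbs ^ Module.finrank ℚ F₂ *
      (discr F₂).natAbs ^ Module.finrank ℚ F₁ :=
  natAbs_discr_eq_natAbs_discr_pow_mul_natAbs_discr_pow K _ _
    (linearDisjoint_of_isGalois_isCoprime_discr _ _ _ hcop) htop
    (isCoprime_differentIdeal_of_isCoprime_discr K hcop)

theorem finrank_eq_mul_of_isCoprime_discr (htop : F₁ ⊔ F₂ = ⊤)
    (hcop : IsCoprime (discr F₁) (discr F₂)) :
    Module.finrank ℚ K = Module.finrank ℚ F₁ * Module.finrank ℚ F₂ := by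
  rw [← (linearDisjoint_of_isGalois_isCoprime_discr _ _ _ hcop).finrank_sup, htop, finrank_top']

end CoprimeDiscriminants

theorem exists_algebraMap_ringOfIntegers_eq {F : IntermediateField ℚ K} {z : 𝓞 K}
    (hz : (z : K) ∈ F) : ∃ y : 𝓞 F, algebraMap (𝓞 F) (𝓞 K) y = z := by
  obtain ⟨y, hy⟩ := exists_ringOfIntegers_coe_eq hz z.isIntegral_coe
  exact ⟨y, RingOfIntegers.ext hy⟩

section AdjoinCubeRootOfUnity

variable {w : 𝓞 K}

theorem isCyclotomicExtension_adjoin_three (hw : IsPrimitiveRoot w 3) :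
    IsCyclotomicExtension {3} ℚ ℚ⟮(w : K)⟯ := by
  have hw' : IsPrimitiveRoot (w : K) 3 := hw.map_of_injective RingOfIntegers.coe_injective
  exact hw'.intermediateField_adjoin_isCyclotomicExtension ℚ

theorem finrank_adjoin_of_isPrimitiveRoot_three (hw : IsPrimitiveRoot w 3) :
    Module.finrank ℚ ℚ⟮(w : K)⟯ = 2 := by
  have := isCyclotomicExtension_adjoin_three hw
  rw [IsCyclotomicExtension.Rat.finrank 3, Nat.totient_prime Nat.prime_three]

theorem natAbs_discr_adjoin_of_isPrimitiveRoot_three (hw : IsPrimitiveRoot w 3) :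
    (discr ℚ⟮(w : K)⟯).natAbs = 3 := by
  have := isCyclotomicExtension_adjoin_three hw
  have : Fact (Nat.Prime 3) := ⟨Nat.prime_three⟩
  rw [IsCyclotomicExtension.Rat.discr_prime 3]
  decide

theorem exists_adjoin_eq_top_of_isPrimitiveRoot_three (hw : IsPrimitiveRoot w 3) :
    ∃ y : 𝓞 ℚ⟮(w : K)⟯, algebraMap _ (𝓞 K) y = w ∧ Algebra.adjoin ℤ {y} = ⊤ := by
  have := isCyclotomicExtension_adjoin_three hw
  obtain ⟨y, hy⟩ := exists_algebraMap_ringOfIntegers_eq (mem_adjoin_simple_self ℚ (w : K))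
  have hprim : IsPrimitiveRoot y 3 :=
    .of_map_of_injective (hy.symm ▸ hw) (RingOfIntegers.algebraMap.injective _ K)
  have hprim' : IsPrimitiveRoot (y : ℚ⟮(w : K)⟯) 3 :=
    hprim.map_of_injective RingOfIntegers.coe_injective
  exact ⟨y, hy, IsCyclotomicExtension.Rat.adjoin_singleton_eq_top hprim'⟩

end AdjoinCubeRootOfUnity

section AdjoinCubicRoot

variable {x : 𝓞 K}

theorem finrank_adjoin_of_aeval_shiftedCubic (hx : aeval x shiftedCubic = 0) :
    Module.finrank ℚ ℚ⟮(x : K)⟯ = 3 := by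
  have hx' : aeval (x : K) shiftedCubic = 0 := by rw [aeval_algebraMap_apply, hx, map_zero]
  rw [adjoin.finrank (Algebra.IsIntegral.isIntegral _), minpoly_rat_eq_map_shiftedCubic hx',
    shiftedCubic_monic.natDegree_map, shiftedCubic_natDegree]

theorem exists_powerBasis_adjoin_coe (hx : aeval x shiftedCubic = 0) :
    ∃ (y : 𝓞 ℚ⟮(x : K)⟯) (B : PowerBasis ℚ ℚ⟮(x : K)⟯),
      algebraMap _ (𝓞 K) y = x ∧ B.gen = y ∧ aeval y shiftedCubic = 0 := by
  obtain ⟨y, hy⟩ := exists_algebraMap_ringOfIntegers_eq (mem_adjoin_simple_self ℚ (x : K))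
  refine ⟨y, adjoin.powerBasis (Algebra.IsIntegral.isIntegral _), hy, ?_, ?_⟩
  · rw [adjoin.powerBasis_gen]
    exact Subtype.ext (congrArg RingOfIntegers.val hy).symm
  · apply RingOfIntegers.algebraMap.injective _ K
    rw [← aeval_algebraMap_apply, hy, hx, map_zero]

theorem discr_adjoin_of_aeval_shiftedCubic (hx : aeval x shiftedCubic = 0) :
    discr ℚ⟮(x : K)⟯ = 49 := by
  obtain ⟨y, B, -, hB, hy⟩ := exists_powerBasis_adjoin_coe hx
  exact discr_eq_of_aeval_shiftedCubic hB hy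

end AdjoinCubicRoot

section Sextic

variable {w x : 𝓞 K}

theorem isCoprime_discr_adjoin (hw : IsPrimitiveRoot w 3) (hx : aeval x shiftedCubic = 0) :
    IsCoprime (discr ℚ⟮(w : K)⟯) (discr ℚ⟮(x : K)⟯) := by
  rw [Int.isCoprime_iff_nat_coprime, natAbs_discr_adjoin_of_isPrimitiveRoot_three hw,
    discr_adjoin_of_aeval_shiftedCubic hx]
  decide

theorem isGalois_adjoin_of_isPrimitiveRoot_three (hw : IsPrimitiveRoot w 3) :
    IsGalois ℚ ℚ⟮(w : K)⟯ :=
  have := isCyclotomicExtension_adjoin_three hw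
  IsCyclotomicExtension.isGalois {3} ℚ _

theorem adjoin_pair_eq_top (hw : IsPrimitiveRoot w 3) (hx : aeval x shiftedCubic = 0)
    (htop : ℚ⟮(w : K)⟯ ⊔ ℚ⟮(x : K)⟯ = ⊤) : Algebra.adjoin ℤ {w, x} = ⊤ := by
  have := isGalois_adjoin_of_isPrimitiveRoot_three hw
  obtain ⟨y₁, hy₁, hgen₁⟩ := exists_adjoin_eq_top_of_isPrimitiveRoot_three hw
  obtain ⟨y₂, B, hy₂, hB, hroot⟩ := exists_powerBasis_adjoin_coe hx
  have h := adjoin_pair_eq_top_of_isCoprime_discr htop (isCoprime_discr_adjoin hw hx) hgen₁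
    (adjoin_eq_top_of_aeval_shiftedCubic hB hroot)
  rwa [hy₁, hy₂] at h

theorem finrank_eq_six (hw : IsPrimitiveRoot w 3) (hx : aeval x shiftedCubic = 0)
    (htop : ℚ⟮(w : K)⟯ ⊔ ℚ⟮(x : K)⟯ = ⊤) : Module.finrank ℚ K = 6 := by
  have := isGalois_adjoin_of_isPrimitiveRoot_three hw
  rw [finrank_eq_mul_of_isCoprime_discr htop (isCoprime_discr_adjoin hw hx),
    finrank_adjoin_of_isPrimitiveRoot_three hw, finrank_adjoin_of_aeval_shiftedCubic hx]

theorem natAbs_discr_eq (hw : IsPrimitiveRoot w 3) (hx : aeval x shiftedCubic = 0)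
    (htop : ℚ⟮(w : K)⟯ ⊔ ℚ⟮(x : K)⟯ = ⊤) : (discr K).natAbs = 3 ^ 3 * 49 ^ 2 := by
  have := isGalois_adjoin_of_isPrimitiveRoot_three hw
  rw [natAbs_discr_eq_of_isCoprime_discr htop (isCoprime_discr_adjoin hw hx),
    natAbs_discr_adjoin_of_isPrimitiveRoot_three hw, finrank_adjoin_of_isPrimitiveRoot_three hw,
    discr_adjoin_of_aeval_shiftedCubic hx, finrank_adjoin_of_aeval_shiftedCubic hx]
  rfl

open InfinitePlace in
theorem minkowskiBound_lt_nine (hrank : Module.finrank ℚ K = 6)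
    (hdiscr : (discr K).natAbs = 3 ^ 3 * 49 ^ 2) :
    (4 / Real.pi) ^ nrComplexPlaces K * ((Module.finrank ℚ K).factorial /
      (Module.finrank ℚ K : ℝ) ^ Module.finrank ℚ K * √|(discr K : ℝ)|) < 9 := by
  have hplaces : nrComplexPlaces K ≤ 3 := by
    have := card_add_two_mul_card_eq_rank K
    omega
  have habs : |(discr K : ℝ)| = 3 ^ 3 * 49 ^ 2 := by
    rw [← Int.cast_abs, Int.abs_eq_natAbs, hdiscr]
    norm_num
  have hsqrt : √(3 ^ 3 * 49 ^ 2 : ℝ) ≤ 255 := by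
    rw [Real.sqrt_le_left (by norm_num)]
    norm_num
  have hone_le : 1 ≤ 4 / Real.pi := by
    rw [one_le_div Real.pi_pos]
    exact Real.pi_le_four
  have hpow : (4 / Real.pi) ^ nrComplexPlaces K ≤ (4 / 3.14) ^ 3 :=
    calc (4 / Real.pi) ^ nrComplexPlaces K ≤ (4 / Real.pi) ^ 3 := pow_le_pow_right₀ hone_le hplaces
      _ ≤ (4 / 3.14) ^ 3 := by gcongr; exact Real.pi_gt_d2.le
  rw [habs, hrank]
  calc _ ≤ (4 / 3.14 : ℝ) ^ 3 * ((6 : ℕ).factorial / ((6 : ℕ) : ℝ) ^ 6 * 255) := by gcongr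
    _ < 9 := by norm_num [Nat.factorial]

theorem isPrincipal_of_absNorm_le_eight (hw : w ^ 2 + w + 1 = 0) (hx : aeval x shiftedCubic = 0)
    (hgen : Algebra.adjoin ℤ {w, x} = ⊤) {P : Ideal (𝓞 K)} [hP : P.IsPrime] (hP0 : P ≠ ⊥)
    (hnorm : Ideal.absNorm P ≤ 8) : Submodule.IsPrincipal P := by
  have : P.IsMaximal := hP.isMaximal hP0
  let _ : Field (𝓞 K ⧸ P) := Ideal.Quotient.field P
  have : Finite (𝓞 K ⧸ P) := Ideal.finiteQuotientOfFreeOfNeBot P hP0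
  rw [Ideal.absNorm_apply, Submodule.cardQuot_apply] at hnorm
  have hwP : Ideal.Quotient.mk P w ^ 2 + Ideal.Quotient.mk P w + 1 = 0 := by
    simpa only [map_add, map_pow, map_one, map_zero] using congrArg (Ideal.Quotient.mk P) hw
  have hxP : aeval (Ideal.Quotient.mkₐ ℤ P x) shiftedCubic = 0 := by
    rw [aeval_algHom_apply, hx, map_zero]
  have h7 : (7 : 𝓞 K) ∈ P := by
    rw [← Ideal.Quotient.eq_zero_iff_mem, map_ofNat]
    exact seven_eq_zero_of_card_le_eight hnorm hwP hxP
  exact isPrincipal_of_seven_mem hw hx hgen h7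

theorem isPrincipalIdealRing_ringOfIntegers (hw : IsPrimitiveRoot w 3)
    (hx : aeval x shiftedCubic = 0) (htop : ℚ⟮(w : K)⟯ ⊔ ℚ⟮(x : K)⟯ = ⊤) :
    IsPrincipalIdealRing (𝓞 K) := by
  apply RingOfIntegers.isPrincipalIdealRing_of_isPrincipal_of_norm_le_of_isPrime
  intro P hP hle
  have hlt : Ideal.absNorm (P : Ideal (𝓞 K)) < 9 := by
    exact_mod_cast hle.trans_lt
      (minkowskiBound_lt_nine (finrank_eq_six hw hx htop) (natAbs_discr_eq hw hx htop))
  have hw' : w ^ 2 + w + 1 = 0 := by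
    have hsum := hw.geom_sum_eq_zero (by norm_num)
    simp only [Finset.sum_range_succ, Finset.sum_range_zero] at hsum
    linear_combination hsum
  exact isPrincipal_of_absNorm_le_eight hw' hx (adjoin_pair_eq_top hw hx htop)
    (nonZeroDivisors.coe_ne_zero P) (Nat.le_of_lt_succ hlt)

end Sextic

end Compositum

theorem adjoin_sup_adjoin_eq_top_of_coe {k E : Type*} [Field k] [Field E] [Algebra k E]
    {L : IntermediateField k E} {a b : L} (h : k⟮(a : E)⟯ ⊔ k⟮(b : E)⟯ = L) :
    k⟮a⟯ ⊔ k⟮b⟯ = ⊤ := by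
  apply lift_injective L
  rw [lift_sup, lift_adjoin_simple, lift_adjoin_simple, lift_top, h]

theorem isPrincipalIdealRing_closure_of_adjoin_int_eq_top {R S : Type*} [CommRing R] [Ring S]
    [IsPrincipalIdealRing R] (f : R →+* S) {s : Set R} (hs : Algebra.adjoin ℤ s = ⊤) :
    IsPrincipalIdealRing (Subring.closure (f '' s)) := by
  have hclosure : Subring.closure s = ⊤ := by
    have htop : (Algebra.adjoin ℤ s).toSubring = ⊤ := by rw [hs, Algebra.top_toSubring]
    rwa [Algebra.adjoin_int] at htop
  rw [← RingHom.map_closure, hclosure, ← RingHom.range_eq_map]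
  exact .of_surjective f.rangeRestrict f.rangeRestrict_surjective

theorem isPrincipalIdealRing_closure_pair {E : Type*} [Field E] [CharZero E] {α β : E}
    (hα : IsPrimitiveRoot α 3) (hβ : aeval β shiftedCubic = 0) :
    IsPrincipalIdealRing (Subring.closure {α, β}) := by
  have hαint : IsIntegral ℤ α := hα.isIntegral (by norm_num)
  have hβint : IsIntegral ℤ β := ⟨shiftedCubic, shiftedCubic_monic, hβ⟩
  let K : IntermediateField ℚ E := ℚ⟮α⟯ ⊔ ℚ⟮β⟯
  have := adjoin.finiteDimensional (hαint.tower_top (A := ℚ))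
  have := adjoin.finiteDimensional (hβint.tower_top (A := ℚ))
  have : NumberField K := { to_finiteDimensional := finiteDimensional_sup ℚ⟮α⟯ ℚ⟮β⟯ }
  obtain ⟨w, hw⟩ : ∃ w : 𝓞 K, ((w : K) : E) = α :=
    exists_ringOfIntegers_coe_eq (le_sup_left (a := ℚ⟮α⟯) (mem_adjoin_simple_self ℚ α)) hαint
  obtain ⟨x, hx⟩ : ∃ x : 𝓞 K, ((x : K) : E) = β :=
    exists_ringOfIntegers_coe_eq (le_sup_right (a := ℚ⟮α⟯) (mem_adjoin_simple_self ℚ β)) hβint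
  have htop : ℚ⟮(w : K)⟯ ⊔ ℚ⟮(x : K)⟯ = ⊤ := adjoin_sup_adjoin_eq_top_of_coe (by rw [hw, hx])
  let f : 𝓞 K →ₐ[ℤ] E := IsScalarTower.toAlgHom ℤ (𝓞 K) E
  have hf : Function.Injective f := FaithfulSMul.algebraMap_injective (𝓞 K) E
  have hfw : f w = α := hw
  have hfx : f x = β := hx
  have hprim : IsPrimitiveRoot w 3 := .of_map_of_injective (hfw.symm ▸ hα) hf
  have hroot : aeval x shiftedCubic = 0 := by
    apply hf
    rw [← aeval_algHom_apply, hfx, hβ, map_zero]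
  have := isPrincipalIdealRing_ringOfIntegers hprim hroot htop
  have h := isPrincipalIdealRing_closure_of_adjoin_int_eq_top (f : 𝓞 K →+* E)
    (adjoin_pair_eq_top hprim hroot htop)
  rwa [Set.image_pair, RingHom.coe_coe, hfw, hfx] at h

theorem isPrimitiveRoot_om : IsPrimitiveRoot om 3 := by
  simpa [om] using Complex.isPrimitiveRoot_exp 3 (by norm_num)

theorem aeval_t7_sub_two : aeval (t7 - 2) shiftedCubic = 0 := by
  have hprim := Complex.isPrimitiveRoot_exp 7 (by norm_num)
  set ζ := Complex.exp (2 * Real.pi * Complex.I / (7 : ℕ)) with hζ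
  have hζ0 : ζ ≠ 0 := Complex.exp_ne_zero _
  have ht : t7 = ζ + ζ⁻¹ := by
    rw [hζ, ← Complex.exp_neg, t7, Complex.ofReal_cos, Complex.two_cos]
    push_cast
    congr 2 <;> ring
  have hsum := hprim.geom_sum_eq_zero (by norm_num)
  simp only [Finset.sum_range_succ, Finset.sum_range_zero] at hsum
  rw [aeval_shiftedCubic, ht]
  field_simp
  linear_combination hsum

theorem OL7_eq_closure_om_t7_sub_two : OL7 = Subring.closure {om, t7 - 2} := by
  have hadd : t7 - 2 + 2 = t7 := sub_add_cancel t7 2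
  apply le_antisymm <;> refine Subring.closure_le.2 ?_ <;> rintro z (rfl | rfl)
  · exact Subring.subset_closure (by simp)
  · rw [← hadd]
    exact add_mem (Subring.subset_closure (by simp)) (ofNat_mem _ 2)
  · exact Subring.subset_closure (by simp)
  · exact sub_mem (Subring.subset_closure (by simp)) (ofNat_mem _ 2)

/-- The ring of integers `O_L = ℤ[ω][θ]` of the number field `L = ℚ(ω, θ)`, where
`ω = e^{2πi/3}` and `θ = 2cos(2π/7)`, is a principal ideal domain. -/
theorem stmt16 : IsPrincipalIdealRing ↥OL7 := by
  rw [OL7_eq_closure_om_t7_sub_two]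
  exact isPrincipalIdealRing_closure_pair isPrimitiveRoot_om aeval_t7_sub_two
end
end

section
/- Let θ₁ = 2cos(2π/15), and θ_{m+1} = θ_m² − 2 for m = 1, 2, 3 (so θ₂ = 2cos(4π/15), θ₃ = 2cos(8π/15), θ₄ = 2cos(16π/15)). For ℓ ∈ {0, 1, 2, 3} and Gaussian integers a_ℓ, b_ℓ, c_ℓ, d_ℓ ∈ ℤ[i], set σ^m(x_ℓ) = a_ℓ + b_ℓθ_{m+1} + c_ℓθ_{m+1}² + d_ℓθ_{m+1}³ for m = 0, 1, 2, 3 (with x_ℓ = σ⁰(x_ℓ)). If not all coefficients are zero, then the determinant of the 4×4 complex matrix [[x₀, x₁, x₂, x₃], [i·σ(x₃), σ(x₀), σ(x₁), σ(x₂)], [i·σ²(x₂), i·σ²(x₃), σ²(x₀), σ²(x₁)], [i·σ³(x₁), i·σ³(x₂), i·σ³(x₃), σ³(x₀)]] is a nonzero Gaussian integer; in particular its squared modulus is at least 1. (This is the full-diversity / non-vanishing determinant property of the 4×4 perfect space-time code built on the cyclic division algebra (ℚ(i, θ₁)/ℚ(i), σ, i).) -/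
noncomputable section

open Complex GaussianInt

/-- `θ₁ = 2cos(2π/15)`. -/
def s1 : ℂ := 2 * Real.cos (2 * Real.pi / 15)

/-- `θ₂ = θ₁² − 2 = 2cos(4π/15)`. -/
def s2 : ℂ := s1 ^ 2 - 2

/-- `θ₃ = θ₂² − 2 = 2cos(8π/15)`. -/
def s3 : ℂ := s2 ^ 2 - 2

/-- `θ₄ = θ₃² − 2 = 2cos(16π/15)`. -/
def s4 : ℂ := s3 ^ 2 - 2

/-- `σ^m(x_ℓ) = a_ℓ + b_ℓ·θ_{m+1} + c_ℓ·θ_{m+1}² + d_ℓ·θ_{m+1}³`, as a function of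
the evaluation point `t = θ_{m+1}`. -/
def Y (a b c d : Fin 4 → GaussianInt) (ℓ : Fin 4) (t : ℂ) : ℂ :=
  toComplex (a ℓ) + toComplex (b ℓ) * t + toComplex (c ℓ) * t ^ 2
    + toComplex (d ℓ) * t ^ 3

/-- The codeword matrix of the `4×4` perfect space-time code built on the cyclic
division algebra `(ℚ(i,θ₁)/ℚ(i), σ, i)` determined by the coefficients `a b c d`. -/
def M4 (a b c d : Fin 4 → GaussianInt) : Matrix (Fin 4) (Fin 4) ℂ :=
  !![Y a b c d 0 s1, Y a b c d 1 s1, Y a b c d 2 s1, Y a b c d 3 s1;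
     Complex.I * Y a b c d 3 s2, Y a b c d 0 s2, Y a b c d 1 s2, Y a b c d 2 s2;
     Complex.I * Y a b c d 2 s3, Complex.I * Y a b c d 3 s3, Y a b c d 0 s3,
       Y a b c d 1 s3;
     Complex.I * Y a b c d 1 s4, Complex.I * Y a b c d 2 s4,
       Complex.I * Y a b c d 3 s4, Y a b c d 0 s4]

/-!
Let `R = ℤ[i][θ₁]` and let `Λ` be the cyclic algebra over `R` generated by `e` with
`e r = σ(r) e` and `e⁴ = i`. The codeword matrix describes right multiplication by
`x = x₀ + x₁e + x₂e² + x₃e³` on the left `R`-module `Λ`. Conjugation by `e` shows that its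
determinant is fixed by `σ`, hence lies in `ℤ[i]`.

The determinant does not vanish for `x ≠ 0` because of the prime `2 + i` of `ℤ[i]`. The minimal
polynomial of `θ₁` is `(X + 1)⁴` modulo `2 + i`, so there is a single prime `P` above it, with
residue field `𝔽₅`, and `σ` acts trivially modulo `P`. Modulo `P` the determinant becomes the norm
form of `𝔽₅[X] / (X⁴ - 3)`. As `X⁴ - 3` is irreducible over `𝔽₅`, a zero of the determinant has
all `xₗ ∈ P`. The ideal `P` is not principal, but it is generated by `θ₁ + 1` after inverting
`s = -2 + i`, which is `1` modulo `P`. So `s x / (θ₁ + 1)` is again a zero, and by descent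
`xₗ ∈ Pᴺ` for all `N`; Krull's intersection theorem then gives `x = 0`.
-/

section CyclicMatrix

open Polynomial Matrix

variable {n : ℕ} {R S F : Type*} [CommRing R] [CommRing S] [Field F]

/-- The matrix of right multiplication by `x = x₀ + x₁ e + ⋯ + xₙ₋₁ eⁿ⁻¹` on the cyclic algebra over
`R` with `e r = σ r e` and `eⁿ = γ`: row `m` lists the coordinates of `eᵐ x` in the left basis
`1, e, …, eⁿ⁻¹`. Subtraction of indices is modulo `n`, and the entries that wrap around carry the
factor `γ`. -/
def cyclicMatrix (σ : R →+* R) (γ : R) (x : Fin n → R) : Matrix (Fin n) (Fin n) R :=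
  Matrix.of fun m k ↦ (if k < m then γ else 1) * σ^[m] (x (k - m))

theorem cyclicMatrix_map (σ : R →+* R) (τ : S →+* S) (φ : R →+* S)
    (hφ : Function.Semiconj φ σ τ) (γ : R) (x : Fin n → R) :
    (cyclicMatrix σ γ x).map φ = cyclicMatrix τ (φ γ) (φ ∘ x) := by
  ext m k
  simp [cyclicMatrix, apply_ite φ, (hφ.iterate_right m).eq]

theorem cyclicMatrix_const_mul (σ : R →+* R) (γ r : R) (x : Fin n → R) :
    cyclicMatrix σ γ (fun l ↦ r * x l) =
      diagonal (fun m : Fin n ↦ σ^[m] r) * cyclicMatrix σ γ x := by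
  ext m k
  simp only [cyclicMatrix, Matrix.of_apply, iterate_map_mul, diagonal_mul]
  ring

theorem det_cyclicMatrix_const_mul (σ : R →+* R) (γ r : R) (x : Fin n → R) :
    (cyclicMatrix σ γ fun l ↦ r * x l).det =
      (∏ m : Fin n, σ^[m] r) * (cyclicMatrix σ γ x).det := by
  rw [cyclicMatrix_const_mul, Matrix.det_mul, Matrix.det_diagonal]

theorem val_finRotate (m : Fin n) :
    (finRotate n m : ℕ) = if (m : ℕ) + 1 = n then 0 else (m : ℕ) + 1 := by
  obtain _ | n := n
  · exact m.elim0
  · simp only [coe_finRotate, Fin.ext_iff, Fin.val_last, Nat.add_right_cancel_iff]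

theorem iterate_finRotate {α : Type*} {f : α → α} (hf : ∀ a, f^[n] a = a) (m : Fin n) (a : α) :
    f^[finRotate n m] a = f^[m] (f a) := by
  rw [val_finRotate, ← Function.iterate_succ_apply]
  split_ifs with hm
  · rw [Nat.succ_eq_add_one, hm, hf, Function.iterate_zero_apply]
  · rfl

-- Conjugation by `e` acts on the cyclic algebra as `σ` does on the coefficients.
theorem diagonal_mul_cyclicMatrix_submatrix_finRotate {σ : R →+* R} (hσ : ∀ r, σ^[n] r = r)
    (γ : R) (x : Fin n → R) :
    diagonal (fun m : Fin n ↦ if (m : ℕ) + 1 = n then γ else 1) *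
        (cyclicMatrix σ γ x).submatrix (finRotate n) (finRotate n) =
      cyclicMatrix σ γ (σ ∘ x) *
        diagonal (fun m : Fin n ↦ if (m : ℕ) + 1 = n then γ else 1) := by
  ext m k
  have hsub : finRotate n k - finRotate n m = k - m := by
    have := m.neZero
    simp only [finRotate_apply, add_sub_add_right_eq_sub]
  simp only [cyclicMatrix, diagonal_mul, mul_diagonal, submatrix_apply, of_apply,
    iterate_finRotate hσ, hsub, Function.comp_apply]
  simp only [Fin.lt_def, val_finRotate]
  split_ifs <;> first | omega | ring

theorem map_det_cyclicMatrix [IsDomain R] {σ : R →+* R} (hσ : ∀ r, σ^[n] r = r) {γ : R}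
    (hγ : γ ≠ 0) (hσγ : σ γ = γ) (x : Fin n → R) :
    σ (cyclicMatrix σ γ x).det = (cyclicMatrix σ γ x).det := by
  have hdet := congrArg Matrix.det (diagonal_mul_cyclicMatrix_submatrix_finRotate hσ γ x)
  rw [Matrix.det_mul, Matrix.det_mul, Matrix.det_submatrix_equiv_self, mul_comm,
    Matrix.det_diagonal] at hdet
  have hprod : (∏ m : Fin n, if (m : ℕ) + 1 = n then γ else 1) ≠ 0 :=
    Finset.prod_ne_zero_iff.2 fun m _ ↦ by split_ifs <;> simp [hγ]
  rw [RingHom.map_det, RingHom.mapMatrix_apply, cyclicMatrix_map σ σ σ (fun _ ↦ rfl), hσγ]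
  exact (mul_right_cancel₀ hprod hdet).symm

theorem cyclicMatrix_id_map_mulVec_pow [Algebra R S] {γ : R} {z : S}
    (hz : z ^ n = algebraMap R S γ) (y : Fin n → R) :
    (cyclicMatrix (RingHom.id R) γ y).map (algebraMap R S) *ᵥ (fun k ↦ z ^ (k : ℕ)) =
      (∑ l, y l • z ^ (l : ℕ)) • fun m : Fin n ↦ z ^ (m : ℕ) := by
  ext m
  have := m.neZero
  simp only [Matrix.mulVec, dotProduct, Pi.smul_apply, smul_eq_mul, Finset.sum_mul]
  refine (Fintype.sum_equiv (Equiv.addRight m) _ _ fun l ↦ ?_).symm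
  have hwrap : z ^ (l + m : ℕ) =
      algebraMap R S (if l + m < m then γ else 1) * z ^ ((l + m : Fin n) : ℕ) := by
    simp only [Fin.lt_def, Fin.val_add_eq_ite]
    split_ifs with hle hlt hlt
    · rw [← hz, ← pow_add, Nat.add_sub_cancel' hle]
    · omega
    · omega
    · simp
  simp only [cyclicMatrix, map_apply, of_apply, Equiv.coe_addRight, add_sub_cancel_right,
    RingHom.coe_id, Function.iterate_id, id_eq, map_mul, Algebra.smul_def, mul_assoc, ← pow_add,
    hwrap]
  ring

-- The determinant is the norm of `∑ yₗ zˡ` in the extension of `R` generated by `z`.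
theorem eq_zero_of_det_cyclicMatrix_id_eq_zero [IsDomain R] [IsDomain S] [Algebra R S] {γ : R}
    {z : S} (hz : z ^ n = algebraMap R S γ)
    (hindep : LinearIndependent R fun i : Fin n ↦ z ^ (i : ℕ)) {y : Fin n → R}
    (hy : (cyclicMatrix (RingHom.id R) γ y).det = 0) : y = 0 := by
  rw [Fintype.linearIndependent_iff] at hindep
  obtain ⟨w, hw, hwM⟩ := exists_vecMul_eq_zero_iff.2 hy
  have hprod : (∑ l, y l • z ^ (l : ℕ)) * ∑ m, w m • z ^ (m : ℕ) = 0 :=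
    calc
      _ = (algebraMap R S ∘ w) ⬝ᵥ ((∑ l, y l • z ^ (l : ℕ)) • fun m : Fin n ↦ z ^ (m : ℕ)) := by
        rw [dotProduct_smul, smul_eq_mul]
        simp only [dotProduct, Function.comp_apply, Algebra.smul_def (w _)]
      _ = (algebraMap R S ∘ (w ᵥ* cyclicMatrix (RingHom.id R) γ y)) ⬝ᵥ fun k ↦ z ^ (k : ℕ) := by
        rw [← cyclicMatrix_id_map_mulVec_pow hz, dotProduct_mulVec]
        congr 1
        ext k
        simp [RingHom.map_vecMul]
      _ = 0 := by simp [hwM]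
  rcases mul_eq_zero.1 hprod with hy0 | hw0
  · exact funext (hindep y hy0)
  · exact absurd (funext (hindep w hw0)) hw

theorem linearIndependent_pow_root {f : R[X]} (hf : f.Monic) (hn : f.natDegree = n) :
    LinearIndependent R fun i : Fin n ↦ AdjoinRoot.root f ^ (i : ℕ) := by
  subst hn
  have h := (AdjoinRoot.powerBasis' hf).basis.linearIndependent
  rwa [PowerBasis.coe_basis] at h

theorem eq_zero_of_det_cyclicMatrix_id_eq_zero_of_irreducible {γ : F}
    (hγ : Irreducible (X ^ n - C γ)) {y : Fin n → F}
    (hy : (cyclicMatrix (RingHom.id F) γ y).det = 0) : y = 0 := by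
  have hn : n ≠ 0 := by
    rintro rfl
    simp at hy
  have := Fact.mk hγ
  have hroot : AdjoinRoot.root (X ^ n - C γ) ^ n = algebraMap F _ γ := by
    have h := AdjoinRoot.eval₂_root (X ^ n - C γ)
    rwa [eval₂_sub, eval₂_X_pow, eval₂_C, sub_eq_zero] at h
  exact eq_zero_of_det_cyclicMatrix_id_eq_zero hroot
    (linearIndependent_pow_root (monic_X_pow_sub_C γ hn) natDegree_X_pow_sub_C) hy

-- Infinite descent: reduction modulo `P = ker φ` shows that a zero `x` of the determinant has
-- entries in `P`, and dividing `s * x` by `π` gives another zero.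
theorem mem_ker_pow_of_det_cyclicMatrix_eq_zero [IsDomain R] {σ : R →+* R}
    (hσ : Function.Injective σ) {φ : R →+* F} (hφσ : ∀ r, φ (σ r) = φ r) {γ : R}
    (hγ : Irreducible (X ^ n - C (φ γ))) {π s : R} (hπ : π ≠ 0) (hφπ : φ π = 0) (hφs : φ s = 1)
    (hdvd : ∀ r, φ r = 0 → π ∣ s * r) (N : ℕ) {x : Fin n → R}
    (hx : (cyclicMatrix σ γ x).det = 0) (l : Fin n) : x l ∈ RingHom.ker φ ^ N := by
  induction N generalizing x with
  | zero => simp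
  | succ N ih =>
    have hφx : φ ∘ x = 0 := by
      apply eq_zero_of_det_cyclicMatrix_id_eq_zero_of_irreducible hγ
      rw [← cyclicMatrix_map σ (RingHom.id F) φ hφσ, ← RingHom.mapMatrix_apply, ← RingHom.map_det,
        hx, map_zero]
    choose y hy using fun l ↦ hdvd (x l) (congrFun hφx l)
    have hydet : (cyclicMatrix σ γ y).det = 0 := by
      have hπy : (∏ m : Fin n, σ^[m] π) * (cyclicMatrix σ γ y).det = 0 := by
        rw [← det_cyclicMatrix_const_mul, ← funext hy, det_cyclicMatrix_const_mul, hx, mul_zero]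
      refine (mul_eq_zero.1 hπy).resolve_left (Finset.prod_ne_zero_iff.2 fun m _ ↦ ?_)
      exact fun h0 ↦ hπ (hσ.iterate m (h0.trans (iterate_map_zero σ m).symm))
    have hsx : s * x l ∈ RingHom.ker φ ^ (N + 1) := by
      rw [hy, pow_succ']
      exact Ideal.mul_mem_mul hφπ (ih hydet)
    have hs : (1 - s) * x l ∈ RingHom.ker φ ^ (N + 1) := by
      rw [pow_succ']
      exact Ideal.mul_mem_mul (by simp [RingHom.mem_ker, hφs]) (ih hx)
    convert add_mem hsx hs using 1
    ring

theorem det_cyclicMatrix_ne_zero [IsDomain R] [IsNoetherianRing R] {σ : R →+* R}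
    (hσ : Function.Injective σ) {φ : R →+* F} (hφσ : ∀ r, φ (σ r) = φ r) {γ : R}
    (hγ : Irreducible (X ^ n - C (φ γ))) {π s : R} (hπ : π ≠ 0) (hφπ : φ π = 0) (hφs : φ s = 1)
    (hdvd : ∀ r, φ r = 0 → π ∣ s * r) {x : Fin n → R} (hx : x ≠ 0) :
    (cyclicMatrix σ γ x).det ≠ 0 := by
  refine fun hdet ↦ hx (funext fun l ↦ ?_)
  have hkrull := Ideal.iInf_pow_eq_bot_of_isDomain _ (RingHom.ker_ne_top φ)
  rw [Pi.zero_apply, ← Ideal.mem_bot, ← hkrull, Ideal.mem_iInf]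
  exact fun N ↦ mem_ker_pow_of_det_cyclicMatrix_eq_zero hσ hφσ hγ hπ hφπ hφs hdvd N hdet l

end CyclicMatrix

section Polynomials

open Polynomial

theorem exists_algebraMap_eq_of_fixed {A R : Type*} [CommRing A] [CommRing R] [IsDomain R]
    [Algebra A R] (pb : PowerBasis A R) {σ : R →ₐ[A] R}
    (hσ : pb.dim ≤ Function.minimalPeriod σ pb.gen) {x : R} (hx : σ x = x) :
    ∃ a, algebraMap A R a = x := by
  obtain ⟨p, hdeg, rfl⟩ := pb.exists_eq_aeval x
  have hinj : Function.Injective fun m : Fin pb.dim ↦ σ^[m] pb.gen := fun m k hmk ↦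
    Fin.ext (Function.iterate_injOn_Iio_minimalPeriod (m.2.trans_le hσ) (k.2.trans_le hσ) hmk)
  have hroot (m : Fin pb.dim) :
      (p.map (algebraMap A R) - C (aeval pb.gen p)).eval (σ^[m] pb.gen) = 0 := by
    rw [eval_sub, eval_C, eval_map_algebraMap, ← AlgHom.coe_pow, aeval_algHom_apply,
      AlgHom.coe_pow, Function.iterate_fixed hx, sub_self]
  have hconst : p.map (algebraMap A R) - C (aeval pb.gen p) = 0 := by
    refine eq_zero_of_natDegree_lt_card_of_eval_eq_zero _ hinj hroot ?_
    rw [natDegree_sub_C, Fintype.card_fin]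
    exact natDegree_map_le.trans_lt hdeg
  refine ⟨p.coeff 0, ?_⟩
  rw [← coeff_map, sub_eq_zero.1 hconst, coeff_C_zero]

theorem root_sub_of_dvd_mul {A F : Type*} [CommRing A] [CommRing F] {f : A[X]} {ψ : A →+* F}
    {a s : A} (hfa : f.eval₂ ψ (ψ a) = 0) (hs : ∀ z, ψ z = 0 → f.eval a ∣ s * z)
    {x : AdjoinRoot f} (hx : AdjoinRoot.lift ψ (ψ a) hfa x = 0) :
    AdjoinRoot.root f - AdjoinRoot.of f a ∣ AdjoinRoot.of f s * x := by
  have hmod (p : A[X]) : AdjoinRoot.root f - AdjoinRoot.of f a ∣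
      AdjoinRoot.mk f p - AdjoinRoot.of f (p.eval a) := by
    simpa using map_dvd (AdjoinRoot.mk f) (X_sub_C_dvd_sub_C_eval (a := a) (p := p))
  obtain ⟨p, rfl⟩ := AdjoinRoot.mk_surjective x
  have hp : ψ (p.eval a) = 0 := by rwa [AdjoinRoot.lift_mk, eval₂_at_apply] at hx
  have hfdvd : AdjoinRoot.root f - AdjoinRoot.of f a ∣ AdjoinRoot.of f (f.eval a) := by
    simpa using hmod f
  have hpdvd := hfdvd.trans (map_dvd (AdjoinRoot.of f) (hs _ hp))
  rw [map_mul] at hpdvd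
  have h := dvd_add ((hmod p).mul_left (AdjoinRoot.of f s)) hpdvd
  rwa [mul_sub, sub_add_cancel] at h

theorem irreducible_X_pow_four_sub_C {K : Type*} [Field K] {a : K} (ha : ¬ IsSquare a)
    (hna : ¬ IsSquare (-a)) : Irreducible (X ^ 4 - C a) := by
  refine X_pow_mul_sub_C_irreducible (n := 2) (m := 2)
    (X_pow_sub_C_irreducible_of_prime Nat.prime_two fun b hb ↦ ha ⟨b, by rw [← hb, sq]⟩)
    fun E _ _ x hx ↦ X_pow_sub_C_irreducible_of_prime Nat.prime_two fun b hb ↦ hna ?_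
  have hxint : IsIntegral K x := minpoly.ne_zero_iff.1 (hx ▸ X_pow_sub_C_ne_zero two_pos a)
  have hnorm : Algebra.norm K (IntermediateField.AdjoinSimple.gen K x) = -a := by
    rw [← IntermediateField.adjoin.powerBasis_gen hxint,
      Algebra.PowerBasis.norm_gen_eq_coeff_zero_minpoly]
    simp [IntermediateField.minpoly_gen, hx]
  exact ⟨Algebra.norm K b, by rw [← hnorm, ← hb, map_pow, sq]⟩

end Polynomials

section Theta

open Polynomial

/-- The minimal polynomial of `θ₁ = 2cos(2π/15)` over `ℚ(i)`. -/
def thetaPoly : GaussianInt[X] := X ^ 4 - X ^ 3 - 4 * X ^ 2 + 4 * X + 1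

theorem eval₂_thetaPoly {S : Type*} [CommRing S] (φ : GaussianInt →+* S) (t : S) :
    thetaPoly.eval₂ φ t = t ^ 4 - t ^ 3 - 4 * t ^ 2 + 4 * t + 1 := by
  simp [thetaPoly, eval₂_sub, eval₂_add, eval₂_mul]

theorem thetaPoly_monic : thetaPoly.Monic := by
  unfold thetaPoly
  monicity!

theorem natDegree_thetaPoly : thetaPoly.natDegree = 4 := by
  unfold thetaPoly
  compute_degree!

theorem eval₂_thetaPoly_sq_sub_two {S : Type*} [CommRing S] {φ : GaussianInt →+* S} {t : S}
    (ht : thetaPoly.eval₂ φ t = 0) : thetaPoly.eval₂ φ (t ^ 2 - 2) = 0 := by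
  rw [eval₂_thetaPoly] at ht ⊢
  linear_combination (t ^ 4 + t ^ 3 - 4 * t ^ 2 - 4 * t + 1) * ht

theorem eval_chebyshev_T_five {R : Type*} [CommRing R] (c : R) :
    (Chebyshev.T R 5).eval c = 16 * c ^ 5 - 20 * c ^ 3 + 5 * c := by
  norm_num [Chebyshev.T_eq R 5, Chebyshev.T_eq R 4, Chebyshev.T_eq R 3, Chebyshev.T_two]
  ring

theorem eval₂_thetaPoly_s1 : thetaPoly.eval₂ toComplex s1 = 0 := by
  set c := Real.cos (2 * Real.pi / 15)
  have hpos : 0 < c :=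
    Real.cos_pos_of_mem_Ioo ⟨by linarith [Real.pi_pos], by linarith [Real.pi_pos]⟩
  have hcos : Real.cos ((5 : ℤ) * (2 * Real.pi / 15)) = -(1 / 2) := by
    rw [show ((5 : ℤ) : ℝ) * (2 * Real.pi / 15) = Real.pi - Real.pi / 3 by push_cast; ring,
      Real.cos_pi_sub, Real.cos_pi_div_three]
  have hcheb : 16 * c ^ 5 - 20 * c ^ 3 + 5 * c = -(1 / 2) := by
    rw [← hcos, ← Chebyshev.T_real_cos, eval_chebyshev_T_five]
  have hc : (2 * c) ^ 4 - (2 * c) ^ 3 - 4 * (2 * c) ^ 2 + 4 * (2 * c) + 1 = 0 := by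
    have hne : 2 * c + 1 ≠ 0 := by positivity
    apply mul_left_cancel₀ hne
    linear_combination 2 * hcheb
  rw [eval₂_thetaPoly, s1]
  exact_mod_cast hc

/-- Reduction modulo the prime `2 + i`, under which `i` goes to `3`. -/
def residueMap : GaussianInt →+* ZMod 5 := Zsqrtd.lift ⟨3, by decide⟩

theorem residueMap_apply (z : GaussianInt) : residueMap z = z.re + z.im * 3 := by
  simp [residueMap]

theorem residueMap_eq_zero_iff {z : GaussianInt} : residueMap z = 0 ↔ ⟨2, 1⟩ ∣ z := by
  constructor
  · intro hz
    rw [residueMap_apply] at hz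
    have hdvd : ((5 : ℕ) : ℤ) ∣ z.re + z.im * 3 :=
      (ZMod.intCast_zmod_eq_zero_iff_dvd _ 5).1 (by exact_mod_cast hz)
    obtain ⟨k, hk⟩ := hdvd
    push_cast at hk
    refine ⟨⟨2 * k - z.im, z.im - k⟩, ?_⟩
    ext <;> simp only [Zsqrtd.re_mul, Zsqrtd.im_mul] <;> linarith
  · rintro ⟨w, rfl⟩
    rw [map_mul, residueMap_apply ⟨2, 1⟩]
    reduce_mod_char

theorem eval_neg_one_thetaPoly : thetaPoly.eval (-1) = -5 := by
  norm_num [thetaPoly]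

theorem map_residueMap_thetaPoly : thetaPoly.map residueMap = (X - C (-1)) ^ 4 := by
  have h5 : (5 : (ZMod 5)[X]) = 0 := CharP.ofNat_eq_zero _ 5
  simp only [thetaPoly, Polynomial.map_add, Polynomial.map_sub, Polynomial.map_mul,
    Polynomial.map_pow, Polynomial.map_one, map_X, Polynomial.map_ofNat, C_neg, C_1]
  linear_combination (-X ^ 3 - 2 * X ^ 2) * h5

theorem neg_five_notMem_ker_residueMap_sq : (-5 : GaussianInt) ∉ RingHom.ker residueMap ^ 2 := by
  have hker : RingHom.ker residueMap = Ideal.span {⟨2, 1⟩} := by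
    ext z
    rw [RingHom.mem_ker, residueMap_eq_zero_iff, Ideal.mem_span_singleton]
  have hfactor : (-5 : GaussianInt) = ⟨2, 1⟩ * ⟨-2, 1⟩ := by decide
  have hne : (⟨2, 1⟩ : GaussianInt) ≠ 0 := by decide
  rw [hker, Ideal.span_singleton_pow, Ideal.mem_span_singleton, sq, hfactor,
    mul_dvd_mul_iff_left hne, ← residueMap_eq_zero_iff, residueMap_apply]
  decide

theorem thetaPoly_irreducible : Irreducible thetaPoly := by
  let _ : Algebra GaussianInt (ZMod 5) := residueMap.toAlgebra
  have hmap : algebraMap GaussianInt (ZMod 5) = residueMap := rfl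
  have hfact : Fact (Nat.Prime 5) := ⟨Nat.prime_five⟩
  refine generalizedEisenstein (K := ZMod 5) (q := X - C (-1)) (p := 4) ?_ (monic_X_sub_C _)
    thetaPoly_monic.isPrimitive (by rw [natDegree_thetaPoly]; norm_num) ?_ ?_ ?_
  · rw [Polynomial.map_sub, map_X, map_C]
    exact irreducible_X_sub_C _
  · simp [thetaPoly_monic.leadingCoeff]
  · rw [thetaPoly_monic.leadingCoeff, hmap, map_residueMap_thetaPoly]
    simp
  · rw [modByMonic_X_sub_C_eq_C_eval, eval_neg_one_thetaPoly, map_C, Ne, C_eq_zero,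
      Ideal.Quotient.eq_zero_iff_mem, hmap]
    exact neg_five_notMem_ker_residueMap_sq

/-- The ring of integers `ℤ[i][θ₁]` of `ℚ(i, θ₁)`. -/
abbrev ThetaRing : Type := AdjoinRoot thetaPoly

instance : IsDomain ThetaRing := AdjoinRoot.isDomain_of_prime thetaPoly_irreducible.prime

local notation "θ" => AdjoinRoot.root thetaPoly

/-- The generator `σ` of the Galois group of `ℚ(i, θ₁)` over `ℚ(i)`. -/
def thetaConj : ThetaRing →ₐ[GaussianInt] ThetaRing :=
  AdjoinRoot.liftAlgHom thetaPoly (Algebra.ofId _ _) (θ ^ 2 - 2)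
    (eval₂_thetaPoly_sq_sub_two (AdjoinRoot.eval₂_root thetaPoly))

theorem thetaConj_root : thetaConj θ = θ ^ 2 - 2 :=
  AdjoinRoot.liftAlgHom_root ..

theorem lift_thetaConj {S : Type*} [CommRing S] {φ : GaussianInt →+* S} {t : S}
    (ht : thetaPoly.eval₂ φ t = 0) (x : ThetaRing) :
    AdjoinRoot.lift φ t ht (thetaConj x) =
      AdjoinRoot.lift φ (t ^ 2 - 2) (eval₂_thetaPoly_sq_sub_two ht) x := by
  have hof (z : GaussianInt) :
      AdjoinRoot.lift φ t ht (thetaConj (AdjoinRoot.of thetaPoly z)) = φ z :=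
    (congrArg _ (thetaConj.commutes z)).trans (AdjoinRoot.lift_of ht)
  have hroot : AdjoinRoot.lift φ t ht (thetaConj θ) = t ^ 2 - 2 := by
    rw [thetaConj_root, map_sub, map_pow, map_ofNat, AdjoinRoot.lift_root]
  refine DFunLike.congr_fun (f := (AdjoinRoot.lift φ t ht).comp thetaConj.toRingHom)
    (AdjoinRoot.ringHom_ext (RingHom.ext fun z ↦ ?_) ?_) x
  · exact (hof z).trans (AdjoinRoot.lift_of (eval₂_thetaPoly_sq_sub_two ht)).symm
  · exact hroot.trans (AdjoinRoot.lift_root _).symm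

theorem root_thetaPoly_eq : θ ^ 4 - θ ^ 3 - 4 * θ ^ 2 + 4 * θ + 1 = 0 := by
  rw [← eval₂_thetaPoly (AdjoinRoot.of thetaPoly), AdjoinRoot.eval₂_root]

theorem thetaConj_iterate_two_root : thetaConj^[2] θ = θ ^ 3 - 4 * θ + 1 := by
  simp only [Function.iterate_succ_apply, Function.iterate_zero_apply, thetaConj_root, map_sub,
    map_pow, map_ofNat]
  linear_combination root_thetaPoly_eq

theorem thetaConj_iterate_four_root : thetaConj^[4] θ = θ := by
  have htwo : (thetaConj ^ 2) θ = θ ^ 3 - 4 * θ + 1 := thetaConj_iterate_two_root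
  rw [Function.iterate_add_apply _ 2 2, ← AlgHom.coe_pow, htwo, map_add, map_sub, map_mul,
    map_pow, map_ofNat, map_one, htwo]
  linear_combination (θ ^ 5 + θ ^ 4 - 7 * θ ^ 3 - 4 * θ ^ 2 + 11 * θ - 2) * root_thetaPoly_eq

theorem thetaConj_iterate_four (r : ThetaRing) : thetaConj^[4] r = r := by
  have hid : thetaConj ^ 4 = AlgHom.id GaussianInt ThetaRing := by
    apply AdjoinRoot.algHom_ext
    rw [AlgHom.coe_pow, AlgHom.id_apply, thetaConj_iterate_four_root]
  rw [← AlgHom.coe_pow, hid, AlgHom.id_apply]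

theorem thetaConj_injective : Function.Injective thetaConj :=
  Function.LeftInverse.injective (g := thetaConj^[3]) thetaConj_iterate_four

theorem eq_zero_of_theta_cubic_eq_zero {a b c d : GaussianInt}
    (h : AdjoinRoot.of thetaPoly a + AdjoinRoot.of thetaPoly b * θ +
      AdjoinRoot.of thetaPoly c * θ ^ 2 + AdjoinRoot.of thetaPoly d * θ ^ 3 = 0) :
    a = 0 ∧ b = 0 ∧ c = 0 ∧ d = 0 := by
  have hindep := linearIndependent_pow_root thetaPoly_monic natDegree_thetaPoly
  rw [Fintype.linearIndependent_iff] at hindep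
  have hsum : ∑ i : Fin 4, ![a, b, c, d] i • θ ^ (i : ℕ) = 0 := by
    rw [Fin.sum_univ_four]
    simp only [Algebra.smul_def, AdjoinRoot.algebraMap_eq]
    change AdjoinRoot.of thetaPoly a * θ ^ 0 + AdjoinRoot.of thetaPoly b * θ ^ 1 +
      AdjoinRoot.of thetaPoly c * θ ^ 2 + AdjoinRoot.of thetaPoly d * θ ^ 3 = 0
    rw [pow_zero, mul_one, pow_one, h]
  exact ⟨hindep _ hsum 0, hindep _ hsum 1, hindep _ hsum 2, hindep _ hsum 3⟩

theorem minimalPeriod_thetaConj_root : Function.minimalPeriod thetaConj θ = 4 := by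
  have := Nat.fact_prime_two
  refine Function.minimalPeriod_eq_prime_pow (p := 2) (k := 1) ?_ thetaConj_iterate_four_root
  intro hfix
  rw [pow_one, Function.IsPeriodicPt, Function.IsFixedPt, thetaConj_iterate_two_root] at hfix
  have hcubic := eq_zero_of_theta_cubic_eq_zero (a := 1) (b := -5) (c := 0) (d := 1) (by
    simp only [map_one, map_neg, map_zero, map_ofNat]
    linear_combination hfix)
  exact one_ne_zero hcubic.1

theorem exists_of_eq_of_thetaConj_eq {x : ThetaRing} (hx : thetaConj x = x) :
    ∃ g, AdjoinRoot.of thetaPoly g = x := by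
  refine exists_algebraMap_eq_of_fixed (AdjoinRoot.powerBasis' thetaPoly_monic) ?_ hx
  rw [AdjoinRoot.powerBasis'_gen, AdjoinRoot.powerBasis'_dim, natDegree_thetaPoly,
    minimalPeriod_thetaConj_root]

theorem eval₂_residueMap_neg_one_thetaPoly :
    thetaPoly.eval₂ residueMap (residueMap (-1)) = 0 := by
  rw [eval₂_at_apply, eval_neg_one_thetaPoly, residueMap_apply]
  decide

/-- Reduction of `ℤ[i][θ₁]` modulo the prime above `2 + i`, which is totally ramified:
`θ₁` goes to `-1`. -/
def thetaResidue : ThetaRing →+* ZMod 5 :=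
  AdjoinRoot.lift residueMap (residueMap (-1)) eval₂_residueMap_neg_one_thetaPoly

theorem thetaResidue_thetaConj (x : ThetaRing) : thetaResidue (thetaConj x) = thetaResidue x := by
  have hfixed : residueMap (-1) ^ 2 - 2 = residueMap (-1) := by
    rw [map_neg, map_one]
    ring
  simp only [thetaResidue, lift_thetaConj, hfixed]

theorem root_sub_of_neg_one_dvd_mul {x : ThetaRing} (hx : thetaResidue x = 0) :
    θ - AdjoinRoot.of thetaPoly (-1) ∣ AdjoinRoot.of thetaPoly ⟨-2, 1⟩ * x := by
  refine root_sub_of_dvd_mul eval₂_residueMap_neg_one_thetaPoly (fun z hz ↦ ?_) hx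
  have hfactor : thetaPoly.eval (-1) = ⟨-2, 1⟩ * ⟨2, 1⟩ := by
    rw [eval_neg_one_thetaPoly]
    decide
  rw [hfactor]
  exact mul_dvd_mul_left _ (residueMap_eq_zero_iff.1 hz)

theorem det_cyclicMatrix_thetaConj_ne_zero {x : Fin 4 → ThetaRing} (hx : x ≠ 0) :
    (cyclicMatrix thetaConj.toRingHom (AdjoinRoot.of thetaPoly ⟨0, 1⟩) x).det ≠ 0 := by
  have hI : residueMap ⟨0, 1⟩ = 3 := by
    rw [residueMap_apply]
    decide
  have hs : residueMap ⟨-2, 1⟩ = 1 := by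
    rw [residueMap_apply]
    decide
  have h3 : ¬ IsSquare (3 : ZMod 5) := by decide
  have h3neg : ¬ IsSquare (-3 : ZMod 5) := by decide
  have := Fact.mk Nat.prime_five
  have hres (z : GaussianInt) : thetaResidue (AdjoinRoot.of thetaPoly z) = residueMap z :=
    AdjoinRoot.lift_of _
  have hγ : Irreducible (X ^ 4 - C (thetaResidue (AdjoinRoot.of thetaPoly ⟨0, 1⟩))) := by
    rw [hres, hI]
    exact irreducible_X_pow_four_sub_C h3 h3neg
  have hne : θ - AdjoinRoot.of thetaPoly (-1) ≠ 0 := by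
    intro h
    refine one_ne_zero (eq_zero_of_theta_cubic_eq_zero (a := 1) (b := 1) (c := 0) (d := 0) ?_).1
    simp only [map_one, map_neg, map_zero] at h ⊢
    linear_combination h
  exact det_cyclicMatrix_ne_zero thetaConj_injective thetaResidue_thetaConj hγ hne
    (by simp [thetaResidue]) (by rw [hres, hs])
    (fun _ ↦ root_sub_of_neg_one_dvd_mul) hx

theorem exists_of_eq_det_cyclicMatrix_thetaConj {γ : GaussianInt} (hγ : γ ≠ 0)
    (x : Fin 4 → ThetaRing) : ∃ g, AdjoinRoot.of thetaPoly g =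
      (cyclicMatrix thetaConj.toRingHom (AdjoinRoot.of thetaPoly γ) x).det := by
  apply exists_of_eq_of_thetaConj_eq
  refine map_det_cyclicMatrix (σ := thetaConj.toRingHom) thetaConj_iterate_four ?_
    (thetaConj.commutes γ) x
  have hdeg : thetaPoly.degree ≠ 0 := by
    simp [degree_eq_natDegree thetaPoly_monic.ne_zero, natDegree_thetaPoly]
  exact (map_ne_zero_iff _ (AdjoinRoot.of.injective_of_degree_ne_zero hdeg)).2 hγ

/-- The symbol `x_ℓ = a_ℓ + b_ℓ θ₁ + c_ℓ θ₁² + d_ℓ θ₁³` in `ℤ[i][θ₁]`. -/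
def codeSymbol (a b c d : Fin 4 → GaussianInt) (ℓ : Fin 4) : ThetaRing :=
  AdjoinRoot.of thetaPoly (a ℓ) + AdjoinRoot.of thetaPoly (b ℓ) * θ +
    AdjoinRoot.of thetaPoly (c ℓ) * θ ^ 2 + AdjoinRoot.of thetaPoly (d ℓ) * θ ^ 3

theorem lift_codeSymbol {t : ℂ} (ht : thetaPoly.eval₂ toComplex t = 0)
    (a b c d : Fin 4 → GaussianInt) (ℓ : Fin 4) :
    AdjoinRoot.lift toComplex t ht (codeSymbol a b c d ℓ) = Y a b c d ℓ t := by
  simp [codeSymbol, Y]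

theorem M4_eq_map_cyclicMatrix (a b c d : Fin 4 → GaussianInt) :
    M4 a b c d = (cyclicMatrix thetaConj.toRingHom (AdjoinRoot.of thetaPoly ⟨0, 1⟩)
      (codeSymbol a b c d)).map (AdjoinRoot.lift toComplex s1 eval₂_thetaPoly_s1) := by
  have hI : toComplex ⟨0, 1⟩ = Complex.I := by simp [toComplex_def]
  ext m k
  fin_cases m <;> fin_cases k <;>
    simp [M4, cyclicMatrix, hI, lift_thetaConj, lift_codeSymbol, s2, s3, s4,
      show (-1 : Fin 4) = 3 from rfl, show (-2 : Fin 4) = 2 from rfl,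
      show (-3 : Fin 4) = 1 from rfl]

end Theta

/-- Full diversity / non-vanishing determinant of the `4×4` perfect space-time code:
if the Gaussian-integer coefficients `a_ℓ, b_ℓ, c_ℓ, d_ℓ` are not all zero, the
determinant of the codeword matrix is a nonzero Gaussian integer; in particular its
squared modulus is at least `1`. -/
theorem stmt17 (a b c d : Fin 4 → GaussianInt)
    (h : ¬ ∀ ℓ, a ℓ = 0 ∧ b ℓ = 0 ∧ c ℓ = 0 ∧ d ℓ = 0) :
    (∃ g : GaussianInt, Matrix.det (M4 a b c d) = toComplex g) ∧
    Matrix.det (M4 a b c d) ≠ 0 ∧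
    1 ≤ Complex.normSq (Matrix.det (M4 a b c d)) := by
  obtain ⟨g, hg⟩ := exists_of_eq_det_cyclicMatrix_thetaConj (γ := ⟨0, 1⟩) (by decide)
    (codeSymbol a b c d)
  have hdet : (M4 a b c d).det = toComplex g := by
    rw [M4_eq_map_cyclicMatrix, ← RingHom.mapMatrix_apply, ← RingHom.map_det, ← hg,
      AdjoinRoot.lift_of]
  have hx : codeSymbol a b c d ≠ 0 := fun hx ↦
    h fun ℓ ↦ eq_zero_of_theta_cubic_eq_zero (congrFun hx ℓ)
  have hg0 : g ≠ 0 := by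
    rintro rfl
    exact det_cyclicMatrix_thetaConj_ne_zero hx (by rw [← hg, map_zero])
  have hnorm : 1 ≤ g.norm := GaussianInt.norm_pos.2 hg0
  refine ⟨⟨g, hdet⟩, ?_, ?_⟩
  · rwa [hdet, Ne, toComplex_eq_zero]
  · rw [hdet, ← intCast_real_norm]
    exact_mod_cast hnorm
end
end
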